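/- Let l and z be positive real numbers. Then (1/√(4π)) · ∫₀^∞ y^{-3/2} e^{-z² y - l²/(4y)} dy = e^{-l z} / l. -/

import Mathlib

open MeasureTheory Real Set

/-!
The substitution `u = a * t - b / t` maps `(0, ∞)` bijectively onto `ℝ`, with Jacobian
`a + b / t ^ 2`. The inversion `t ↦ b / (a * t)` exchanges the two summands of the Jacobian and
replaces `u` by `-u`, so for an even integrand each summand contributes half of the integral
(the Cauchy–Schlömilch transformation). Completing the square,
`a * t ^ 2 + b / t ^ 2 = (√a * t - √b / t) ^ 2 + 2 * √(a * b)`, then reduces the integral of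
`exp (-a * t ^ 2 - b / t ^ 2)` to the Gaussian one, and `t = y ^ (-1 / 2)` gives the theorem.
-/

section CauchySchlomilch

variable {E : Type*} [NormedAddCommGroup E] [NormedSpace ℝ E] {a b : ℝ} {f : ℝ → E}

lemma injOn_mul_sub_div (ha : 0 < a) (hb : 0 ≤ b) :
    InjOn (fun t : ℝ ↦ a * t - b / t) (Ioi 0) := by
  refine StrictMonoOn.injOn fun s (hs : 0 < s) t _ hst ↦ ?_
  have hmul : a * s < a * t := by gcongr
  have hdiv : b / t ≤ b / s := by gcongr
  linarith

lemma image_mul_sub_div_Ioi (ha : 0 < a) (hb : 0 < b) :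
    (fun t : ℝ ↦ a * t - b / t) '' Ioi 0 = univ := by
  refine eq_univ_of_forall fun u ↦ ?_
  set s := √(u ^ 2 + 4 * a * b)
  have hs : s ^ 2 = u ^ 2 + 4 * a * b := sq_sqrt (by positivity)
  have hus : 0 < u + s := by
    have : |u| < s := lt_sqrt_of_sq_lt (by rw [sq_abs]; linarith [mul_pos ha hb])
    linarith [neg_abs_le u]
  refine ⟨(u + s) / (2 * a), mem_Ioi.2 (by positivity), ?_⟩
  field_simp
  linarith

lemma hasDerivAt_mul_sub_div (a b : ℝ) {t : ℝ} (ht : t ≠ 0) :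
    HasDerivAt (fun t : ℝ ↦ a * t - b / t) (a + b / t ^ 2) t := by
  convert! ((hasDerivAt_id t).const_mul a).sub ((hasDerivAt_inv ht).const_mul b) using 1
  ring

lemma abs_add_div_sq (ha : 0 ≤ a) (hb : 0 ≤ b) (t : ℝ) : |a + b / t ^ 2| = a + b / t ^ 2 :=
  abs_of_nonneg (by positivity)

lemma integral_Ioi_add_div_sq_smul_comp (ha : 0 < a) (hb : 0 < b) (f : ℝ → E) :
    ∫ t in Ioi 0, (a + b / t ^ 2) • f (a * t - b / t) = ∫ u, f u := by
  have h := integral_image_eq_integral_abs_deriv_smul measurableSet_Ioi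
    (fun t ht ↦ (hasDerivAt_mul_sub_div a b (ne_of_gt ht)).hasDerivWithinAt)
    (injOn_mul_sub_div ha hb.le) f
  simpa only [image_mul_sub_div_Ioi ha hb, setIntegral_univ, abs_add_div_sq ha.le hb.le]
    using h.symm

lemma integrableOn_Ioi_add_div_sq_smul_comp_iff (ha : 0 < a) (hb : 0 < b) :
    IntegrableOn (fun t ↦ (a + b / t ^ 2) • f (a * t - b / t)) (Ioi 0) ↔ Integrable f := by
  have h := integrableOn_image_iff_integrableOn_abs_deriv_smul measurableSet_Ioi
    (fun t ht ↦ (hasDerivAt_mul_sub_div a b (ne_of_gt ht)).hasDerivWithinAt)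
    (injOn_mul_sub_div ha hb.le) f
  simpa only [image_mul_sub_div_Ioi ha hb, integrableOn_univ, abs_add_div_sq ha.le hb.le]
    using h.symm

lemma integrableOn_Ioi_comp_mul_sub_div (ha : 0 < a) (hb : 0 < b) (hf : Integrable f) :
    IntegrableOn (fun t ↦ f (a * t - b / t)) (Ioi 0) := by
  have hbound (t : ℝ) : ‖(a + b / t ^ 2)⁻¹‖ ≤ a⁻¹ := by
    rw [norm_inv, norm_eq_abs, abs_add_div_sq ha.le hb.le]
    gcongr
    exact le_add_of_nonneg_right (by positivity)
  refine (((integrableOn_Ioi_add_div_sq_smul_comp_iff ha hb).2 hf).bdd_smul a⁻¹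
    (φ := fun t ↦ (a + b / t ^ 2)⁻¹) (Measurable.aestronglyMeasurable (by fun_prop))
    (.of_forall hbound)).congr (.of_forall fun t ↦ inv_smul_smul₀ ?_ _)
  positivity

lemma integral_Ioi_div_sq_smul_comp_div {c : ℝ} (hc : 0 < c) (g : ℝ → E) :
    ∫ t in Ioi 0, (c / t ^ 2) • g (c / t) = ∫ t in Ioi 0, g t := by
  calc ∫ t in Ioi 0, (c / t ^ 2) • g (c / t)
      = ∫ t in Ioi 0, (|(-1 : ℝ)| * t ^ ((-1 : ℝ) - 1)) • c • g (c * t ^ (-1 : ℝ)) := by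
        refine setIntegral_congr_fun measurableSet_Ioi fun t (ht : 0 < t) ↦ ?_
        have hsq : t ^ ((-1 : ℝ) - 1) = (t ^ 2)⁻¹ := by
          rw [show (-1 : ℝ) - 1 = -(2 : ℕ) by norm_num, rpow_neg ht.le, rpow_natCast]
        simp only [hsq, rpow_neg_one, abs_neg, abs_one, one_mul, smul_smul, div_eq_mul_inv,
          mul_comm c (t ^ 2)⁻¹]
    _ = ∫ t in Ioi 0, c • g (c * t) :=
        integral_comp_rpow_Ioi (fun t ↦ c • g (c * t)) (by norm_num)
    _ = ∫ t in Ioi 0, g t := by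
        rw [integral_smul, integral_comp_mul_left_Ioi' g 0 hc, mul_zero]

lemma integral_Ioi_div_sq_smul_comp_of_even (hf : Function.Even f) (ha : 0 < a)
    (hb : 0 < b) :
    ∫ t in Ioi 0, (b / t ^ 2) • f (a * t - b / t) =
      a • ∫ t in Ioi 0, f (a * t - b / t) := by
  rw [← integral_smul, ← integral_Ioi_div_sq_smul_comp_div (div_pos hb ha)]
  refine setIntegral_congr_fun measurableSet_Ioi fun t (ht : 0 < t) ↦ ?_
  have hneg : a * (b / a / t) - b / (b / a / t) = -(a * t - b / t) := by
    field_simp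
    ring
  simp only [hneg, hf _, smul_smul]
  congr 1
  field_simp

theorem integral_Ioi_comp_mul_sub_div (hf : Function.Even f) (hfi : Integrable f)
    (ha : 0 < a) (hb : 0 < b) :
    ∫ t in Ioi 0, f (a * t - b / t) = (2 * a)⁻¹ • ∫ u, f u := by
  have hconst := (integrableOn_Ioi_comp_mul_sub_div ha hb hfi).smul a
  have hdiv : IntegrableOn (fun t ↦ (b / t ^ 2) • f (a * t - b / t)) (Ioi 0) := by
    refine (((integrableOn_Ioi_add_div_sq_smul_comp_iff ha hb).2 hfi).sub hconst).congr
      (.of_forall fun t ↦ ?_)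
    simp [add_smul]
  have hsplit : ∫ u, f u = (2 * a) • ∫ t in Ioi 0, f (a * t - b / t) :=
    calc ∫ u, f u
        = ∫ t in Ioi 0, (a • f (a * t - b / t) + (b / t ^ 2) • f (a * t - b / t)) := by
          simp only [← add_smul, integral_Ioi_add_div_sq_smul_comp ha hb]
      _ = a • (∫ t in Ioi 0, f (a * t - b / t)) +
            ∫ t in Ioi 0, (b / t ^ 2) • f (a * t - b / t) := by
          rw [← integral_smul]
          exact integral_add hconst hdiv
      _ = (2 * a) • ∫ t in Ioi 0, f (a * t - b / t) := by
          rw [integral_Ioi_div_sq_smul_comp_of_even hf ha hb, ← add_smul, two_mul]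
  rw [hsplit, inv_smul_smul₀ (by positivity)]

end CauchySchlomilch

theorem integral_Ioi_exp_neg_mul_sq_sub_div_sq {a b : ℝ} (ha : 0 < a) (hb : 0 ≤ b) :
    ∫ t in Ioi (0 : ℝ), exp (-a * t ^ 2 - b / t ^ 2) = √(π / a) / 2 * exp (-2 * √(a * b)) := by
  rcases hb.eq_or_lt with rfl | hb
  · simpa using integral_gaussian_Ioi a
  have hsq {t : ℝ} (ht : 0 < t) : exp (-a * t ^ 2 - b / t ^ 2) =
      exp (-(√a * t - √b / t) ^ 2) * exp (-2 * √(a * b)) := by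
    rw [← exp_add, sqrt_mul ha.le, sub_sq, mul_pow, div_pow, sq_sqrt ha.le, sq_sqrt hb.le]
    congr 1
    field_simp
    ring
  have heven : Function.Even fun u : ℝ ↦ exp (-u ^ 2) := fun u ↦ by simp only [neg_sq]
  have hint : Integrable fun u : ℝ ↦ exp (-u ^ 2) := by
    simpa using integrable_exp_neg_mul_sq one_pos
  have hgauss : ∫ u : ℝ, exp (-u ^ 2) = √π := by simpa using integral_gaussian 1
  rw [setIntegral_congr_fun measurableSet_Ioi fun t ↦ hsq, integral_mul_const,
    integral_Ioi_comp_mul_sub_div heven hint (sqrt_pos.2 ha) (sqrt_pos.2 hb), hgauss,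
    sqrt_div' _ ha.le, smul_eq_mul]
  ring

theorem integral_Ioi_rpow_mul_exp_neg_mul_sub_div {a b : ℝ} (ha : 0 ≤ a) (hb : 0 < b) :
    ∫ y in Ioi (0 : ℝ), y ^ (-(3 : ℝ) / 2) * exp (-a * y - b / y) =
      √(π / b) * exp (-2 * √(a * b)) := by
  set g : ℝ → ℝ := fun t ↦ exp (-b * t ^ 2 - a / t ^ 2) with hg
  have hsubst {y : ℝ} (hy : 0 < y) : y ^ (-(3 : ℝ) / 2) * exp (-a * y - b / y) =
      2 * ((|-(1 / 2 : ℝ)| * y ^ (-(1 / 2 : ℝ) - 1)) • g (y ^ (-(1 / 2 : ℝ)))) := by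
    have hsq : (y ^ (-(1 / 2 : ℝ))) ^ 2 = y⁻¹ := by
      rw [← rpow_mul_natCast hy.le, ← rpow_neg_one]
      norm_num
    have hexp : g (y ^ (-(1 / 2 : ℝ))) = exp (-a * y - b / y) := by
      simp only [hg, hsq, div_inv_eq_mul]
      ring_nf
    rw [hexp, abs_neg, abs_of_pos one_half_pos, smul_eq_mul,
      show -(1 / 2 : ℝ) - 1 = -3 / 2 by norm_num]
    ring
  rw [setIntegral_congr_fun measurableSet_Ioi fun y ↦ hsubst, integral_const_mul,
    integral_comp_rpow_Ioi g (by norm_num), integral_Ioi_exp_neg_mul_sq_sub_div_sq hb ha,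
    mul_comm b a]
  ring

theorem stmt_3 (l z : ℝ) (hl : 0 < l) (hz : 0 < z) :
    (1 / Real.sqrt (4 * Real.pi)) *
      ∫ y in Ioi (0 : ℝ), y ^ (-(3 : ℝ) / 2) * Real.exp (-z ^ 2 * y - l ^ 2 / (4 * y))
      = Real.exp (-l * z) / l := by
  have hroot : √(z ^ 2 * (l ^ 2 / 4)) = z * l / 2 := by
    rw [show z ^ 2 * (l ^ 2 / 4) = (z * l / 2) ^ 2 by ring, sqrt_sq (by positivity)]
  have hconst : √(π / (l ^ 2 / 4)) = √(4 * π) / l := by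
    rw [show π / (l ^ 2 / 4) = 4 * π / l ^ 2 by field_simp, sqrt_div' _ (sq_nonneg l),
      sqrt_sq hl.le]
  have hpi : √(4 * π) ≠ 0 := by positivity
  simp only [← div_div (l ^ 2)]
  rw [integral_Ioi_rpow_mul_exp_neg_mul_sub_div (sq_nonneg z) (by positivity), hroot, hconst,
    show -2 * (z * l / 2) = -l * z by ring]
  field_simp
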